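/- Let r, s ≥ 0 and let (n_1,m_1),…,(n_r,m_r) and (n'_1,m'_1),…,(n'_s,m'_s) be pairs of indices in {1,…,N}. If the multiset {n_1,…,n_r} differs from the multiset {n'_1,…,n'_s}, or the multiset {m_1,…,m_r} differs from the multiset {m'_1,…,m'_s}, then ∫_{M_N(ℂ)} Φ_{n_1m_1}⋯Φ_{n_rm_r}·conj(Φ_{n'_1m'_1})⋯conj(Φ_{n'_sm'_s})·exp(−N·S(Φ)) dΦ = 0, the integral being absolutely convergent. In particular every moment of the LSZ model in which the number of Φ-factors differs from the number of Φ†-factors vanishes. -/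

import Mathlib

/-!
The action and Lebesgue measure are invariant under `Φ ↦ D₁ Φ D₂` with diagonal unitaries `D₁`,
`D₂`, whereas a monomial in the entries of `Φ` and `Φ*` is multiplied by a character of `(D₁, D₂)`,
whose exponents are the differences of the multiplicities of the indices among the two kinds of
factors. If a multiplicity is unbalanced, this character is nontrivial and the integral vanishes.

Absolute convergence: the quartic term is nonnegative and the quadratic one is at least `c ‖Φ‖²`
for some `c > 0`, so the integrand is dominated by a function `‖Φ‖ ^ k * exp (-c' ‖Φ‖²)`.
-/

open MeasureTheory Matrix

/-- The LSZ action `S(Φ) = Σ_{m,n} (E_n + Ẽ_m)|Φ_{nm}|² + (λ/2)·Tr((Φ*Φ)²)`,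
viewed as a complex number. -/
noncomputable def lszAction (N : ℕ) (E Et : Fin N → ℝ) (lam : ℝ)
    (Φ : Fin N → Fin N → ℂ) : ℂ :=
  (∑ n, ∑ m, (((E n + Et m : ℝ)) : ℂ) * ((Complex.normSq (Φ n m) : ℝ) : ℂ))
    + ((lam / 2 : ℝ) : ℂ) *
      ((((Matrix.of Φ)ᴴ * Matrix.of Φ) * ((Matrix.of Φ)ᴴ * Matrix.of Φ)).trace)

section Integral

variable {α 𝕜 F : Type*} [MeasurableSpace α] {μ : Measure α} [NormedField 𝕜]
  [NormedAddCommGroup F] [NormedSpace ℝ F] [NormedSpace 𝕜 F] [SMulCommClass ℝ 𝕜 F]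

lemma integral_eq_zero_of_comp_eq_smul {T : α → α} (hT : MeasurePreserving T μ μ)
    (hTe : MeasurableEmbedding T) {f : α → F} {c : 𝕜} (hc : c ≠ 1)
    (hf : ∀ x, f (T x) = c • f x) : ∫ x, f x ∂μ = 0 := by
  have hfix : c • ∫ x, f x ∂μ = ∫ x, f x ∂μ := by
    rw [← integral_smul, ← hT.integral_comp hTe f]
    simp only [hf]
  have hzero : (c - 1) • ∫ x, f x ∂μ = 0 := by rw [sub_smul, hfix, one_smul, sub_self]
  exact (smul_eq_zero.1 hzero).resolve_left (sub_ne_zero.2 hc)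

end Integral

section Gaussian

variable {F : Type*} [NormedAddCommGroup F] [NormedSpace ℝ F] [FiniteDimensional ℝ F]
  [MeasurableSpace F] [BorelSpace F]

lemma integrable_norm_pow_mul_exp_neg_mul_norm_sq (μ : Measure F) [μ.IsAddHaarMeasure] (k : ℕ)
    {c : ℝ} (hc : 0 < c) : Integrable (fun x => ‖x‖ ^ k * Real.exp (-c * ‖x‖ ^ 2)) μ := by
  rcases subsingleton_or_nontrivial F with _ | _
  · exact (by fun_prop : Continuous _).integrable_of_hasCompactSupport (.of_compactSpace _)
  refine (integrable_fun_norm_addHaar μ (f := fun t => t ^ k * Real.exp (-c * t ^ 2))).2 ?_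
  have hgauss := integrableOn_rpow_mul_exp_neg_mul_sq hc
    (s := (Module.finrank ℝ F - 1 + k : ℕ)) (neg_one_lt_zero.trans_le (Nat.cast_nonneg _))
  simpa only [Real.rpow_natCast, pow_add, mul_assoc, smul_eq_mul] using hgauss

end Gaussian

lemma pi_norm_sq_le_sum_norm_sq {ι : Type*} [Fintype ι] {F : ι → Type*}
    [∀ i, SeminormedAddCommGroup (F i)] (x : ∀ i, F i) : ‖x‖ ^ 2 ≤ ∑ i, ‖x i‖ ^ 2 := by
  have hsum : 0 ≤ ∑ i, ‖x i‖ ^ 2 := by positivity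
  rw [← Real.le_sqrt (norm_nonneg x) hsum, pi_norm_le_iff_of_nonneg (Real.sqrt_nonneg _)]
  exact fun i => Real.le_sqrt_of_sq_le <|
    Finset.single_le_sum (f := fun i => ‖x i‖ ^ 2) (fun _ _ => sq_nonneg _) (Finset.mem_univ i)

section Phases

lemma circle_coe_prod {ι : Type*} (s : Finset ι) (d : ι → Circle) :
    ((∏ i ∈ s, d i : Circle) : ℂ) = ∏ i ∈ s, (d i : ℂ) :=
  map_prod Circle.coeHom d s

lemma exists_circle_pow_ne_pow {k l : ℕ} (hkl : k ≠ l) : ∃ u : Circle, u ^ k ≠ u ^ l := by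
  have hsub : (k : ℝ) - l ≠ 0 := sub_ne_zero.2 (Nat.cast_injective.ne hkl)
  refine ⟨Circle.exp (Real.pi / (k - l)), fun hpow => Circle.exp_pi_ne_one ?_⟩
  calc Circle.exp Real.pi = Circle.exp (k * (Real.pi / (k - l)) - l * (Real.pi / (k - l))) := by
        rw [← sub_mul, mul_div_cancel₀ _ hsub]
    _ = 1 := by simp only [Circle.exp_sub, Circle.exp_natCast_mul, hpow, div_self']

lemma exists_circle_prod_map_ne {ι : Type*} {s t : Multiset ι} (hst : s ≠ t) :
    ∃ d : ι → Circle, (s.map d).prod ≠ (t.map d).prod := by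
  classical
  obtain ⟨a, ha⟩ : ∃ a, s.count a ≠ t.count a := by
    simpa only [ne_eq, Multiset.ext, not_forall] using hst
  obtain ⟨u, hu⟩ := exists_circle_pow_ne_pow ha
  have hprod (m : Multiset ι) : (m.map (Pi.mulSingle a u)).prod = u ^ m.count a := by
    rw [Multiset.prod_map_eq_pow_single a fun i hi _ => Pi.mulSingle_eq_of_ne hi _,
      Pi.mulSingle_eq_same]
  exact ⟨Pi.mulSingle a u, by rwa [hprod, hprod]⟩

variable {ι κ : Type*}

/-- The map `Φ ↦ D₁ Φ D₂` on complex `ι × κ` matrices, where `D₁` and `D₂` are the diagonal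
unitaries with diagonals `d` and `e`. -/
noncomputable def phaseRotation (d : ι → Circle) (e : κ → Circle) :
    (ι → κ → ℂ) ≃ᵐ (ι → κ → ℂ) :=
  .piCongrRight fun a => .piCongrRight fun b => (rotation (d a * e b)).toMeasurableEquiv

lemma phaseRotation_apply (d : ι → Circle) (e : κ → Circle) (Φ : ι → κ → ℂ) (a : ι) (b : κ) :
    phaseRotation d e Φ a b = d a * e b * Φ a b :=
  rfl

lemma measurePreserving_phaseRotation [Fintype ι] [Fintype κ] (d : ι → Circle)
    (e : κ → Circle) : MeasurePreserving (phaseRotation d e) :=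
  volume_preserving_pi fun a => volume_preserving_pi fun b =>
    (rotation (d a * e b)).measurePreserving

lemma of_phaseRotation [Fintype ι] [Fintype κ] [DecidableEq ι] [DecidableEq κ]
    (d : ι → Circle) (e : κ → Circle) (Φ : ι → κ → ℂ) :
    Matrix.of (phaseRotation d e Φ) =
      diagonal (fun a => (d a : ℂ)) * Matrix.of Φ * diagonal (fun b => (e b : ℂ)) := by
  ext a b
  rw [mul_diagonal, diagonal_mul, of_apply, of_apply, phaseRotation_apply, mul_right_comm]

lemma diagonal_circle_mem_unitaryGroup [Fintype ι] [DecidableEq ι] (d : ι → Circle) :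
    diagonal (fun a => (d a : ℂ)) ∈ unitaryGroup ι ℂ := by
  rw [mem_unitaryGroup_iff, star_eq_conjTranspose, diagonal_conjTranspose, diagonal_mul_diagonal,
    ← diagonal_one]
  congr 1
  ext a
  simp [Complex.mul_conj]

end Phases

section Moments

variable {ι κ α β : Type*} [Fintype α] [Fintype β]

/-- The monomial `∏ᵢ Φ_{n i, m i} · ∏ⱼ conj Φ_{n' j, m' j}` in the entries of a complex `ι × κ`
matrix and their conjugates. -/
def entryMonomial (n : α → ι) (m : α → κ) (n' : β → ι) (m' : β → κ) (Φ : ι → κ → ℂ) : ℂ :=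
  (∏ i, Φ (n i) (m i)) * ∏ j, (starRingEnd ℂ) (Φ (n' j) (m' j))

lemma entryMonomial_phaseRotation (n : α → ι) (m : α → κ) (n' : β → ι) (m' : β → κ)
    (d : ι → Circle) (e : κ → Circle) (Φ : ι → κ → ℂ) :
    entryMonomial n m n' m' (phaseRotation d e Φ) =
      (((∏ i, d (n i)) / ∏ j, d (n' j)) * ((∏ i, e (m i)) / ∏ j, e (m' j))) •
        entryMonomial n m n' m' Φ := by
  simp only [entryMonomial, phaseRotation_apply, map_mul, ← Circle.coe_inv_eq_conj,
    Finset.prod_mul_distrib, Circle.smul_def, div_eq_mul_inv, ← Finset.prod_inv_distrib,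
    Circle.coe_mul, circle_coe_prod, smul_eq_mul]
  ring

variable [Fintype ι] [Fintype κ]

lemma norm_entryMonomial_le (n : α → ι) (m : α → κ) (n' : β → ι) (m' : β → κ)
    (Φ : ι → κ → ℂ) :
    ‖entryMonomial n m n' m' Φ‖ ≤ ‖Φ‖ ^ (Fintype.card α + Fintype.card β) := by
  have hentry (a : ι) (b : κ) : ‖Φ a b‖ ≤ ‖Φ‖ := (norm_le_pi_norm _ b).trans (norm_le_pi_norm Φ a)
  simp only [entryMonomial, norm_mul, norm_prod, RCLike.norm_conj, pow_add]
  gcongr <;>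
    exact (Finset.prod_le_prod (fun _ _ => norm_nonneg _) fun _ _ => hentry _ _).trans_eq
      (Finset.prod_const _)

lemma integral_entryMonomial_mul_eq_zero_of_map_ne {n : α → ι} {m : α → κ} {n' : β → ι} {m' : β → κ}
    (h : Finset.univ.val.map n ≠ Finset.univ.val.map n' ∨
      Finset.univ.val.map m ≠ Finset.univ.val.map m')
    {w : (ι → κ → ℂ) → ℂ} (hw : ∀ d e Φ, w (phaseRotation d e Φ) = w Φ) :
    ∫ Φ, entryMonomial n m n' m' Φ * w Φ = 0 := by
  obtain ⟨d, e, hde⟩ : ∃ (d : ι → Circle) (e : κ → Circle),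
      ((∏ i, d (n i)) / ∏ j, d (n' j)) * ((∏ i, e (m i)) / ∏ j, e (m' j)) ≠ 1 := by
    rcases h with hrow | hcol
    · obtain ⟨d, hd⟩ := exists_circle_prod_map_ne hrow
      rw [Multiset.map_map, Multiset.map_map] at hd
      exact ⟨d, 1, by simpa [div_eq_one] using hd⟩
    · obtain ⟨e, he⟩ := exists_circle_prod_map_ne hcol
      rw [Multiset.map_map, Multiset.map_map] at he
      exact ⟨1, e, by simpa [div_eq_one] using he⟩
  refine integral_eq_zero_of_comp_eq_smul (measurePreserving_phaseRotation d e)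
    (phaseRotation d e).measurableEmbedding (Circle.coe_eq_one.not.2 hde) fun Φ => ?_
  rw [entryMonomial_phaseRotation, hw, smul_mul_assoc, Circle.smul_def]

end Moments

lemma trace_sq_conjTranspose_mul_self_unitary {ι κ R : Type*} [Fintype ι] [Fintype κ]
    [DecidableEq ι] [DecidableEq κ] [CommRing R] [StarRing R] {U : Matrix ι ι R}
    {V : Matrix κ κ R} (hU : U ∈ unitaryGroup ι R) (hV : V ∈ unitaryGroup κ R)
    (A : Matrix ι κ R) :
    ((U * A * V)ᴴ * (U * A * V) * ((U * A * V)ᴴ * (U * A * V))).trace =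
      (Aᴴ * A * (Aᴴ * A)).trace := by
  have hgram : (U * A * V)ᴴ * (U * A * V) = Vᴴ * (Aᴴ * A) * V := by
    have hUU : Uᴴ * U = 1 := mem_unitaryGroup_iff'.1 hU
    calc (U * A * V)ᴴ * (U * A * V) = Vᴴ * Aᴴ * (Uᴴ * U) * A * V := by
          simp only [conjTranspose_mul, Matrix.mul_assoc]
      _ = Vᴴ * (Aᴴ * A) * V := by rw [hUU, Matrix.mul_one, Matrix.mul_assoc Vᴴ]
  have hVV : V * Vᴴ = 1 := mem_unitaryGroup_iff.1 hV
  rw [hgram]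
  calc (Vᴴ * (Aᴴ * A) * V * (Vᴴ * (Aᴴ * A) * V)).trace
      = (Vᴴ * (Aᴴ * A * (V * Vᴴ) * (Aᴴ * A)) * V).trace := by simp only [Matrix.mul_assoc]
    _ = (V * Vᴴ * (Aᴴ * A * (V * Vᴴ) * (Aᴴ * A))).trace := trace_mul_cycle _ _ _
    _ = (Aᴴ * A * (Aᴴ * A)).trace := by rw [hVV, Matrix.one_mul, Matrix.mul_one]

section Action

variable {N : ℕ} {E Et : Fin N → ℝ} {lam : ℝ}

lemma lszAction_phaseRotation (d e : Fin N → Circle) (Φ : Fin N → Fin N → ℂ) :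
    lszAction N E Et lam (phaseRotation d e Φ) = lszAction N E Et lam Φ := by
  unfold lszAction
  congr 1
  · simp only [phaseRotation_apply, Complex.normSq_mul, Circle.normSq_coe, one_mul]
  · rw [of_phaseRotation, trace_sq_conjTranspose_mul_self_unitary
      (diagonal_circle_mem_unitaryGroup d) (diagonal_circle_mem_unitaryGroup e)]

open scoped ComplexOrder in
lemma sum_mul_norm_sq_le_re_lszAction (hlam : 0 ≤ lam) (Φ : Fin N → Fin N → ℂ) :
    ∑ a, ∑ b, (E a + Et b) * ‖Φ a b‖ ^ 2 ≤ (lszAction N E Et lam Φ).re := by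
  set G := (Matrix.of Φ)ᴴ * Matrix.of Φ with hG
  have hquartic : 0 ≤ (G * G).trace := by
    have hGG : Gᴴ * G = G * G := by rw [(isHermitian_conjTranspose_mul_self _).eq]
    exact hGG ▸ (posSemidef_conjTranspose_mul_self G).trace_nonneg
  have hre : (lszAction N E Et lam Φ).re =
      ∑ a, ∑ b, (E a + Et b) * ‖Φ a b‖ ^ 2 + lam / 2 * (G * G).trace.re := by
    simp only [lszAction, ← hG, Complex.add_re, Complex.re_ofReal_mul, Complex.re_sum,
      Complex.ofReal_re, Complex.normSq_eq_norm_sq]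
  rw [hre]
  exact le_add_of_nonneg_right (mul_nonneg (by positivity) (Complex.nonneg_iff.1 hquartic).1)

lemma exists_pos_mul_norm_sq_le_re_lszAction (hE : ∀ a b, 0 < E a + Et b) (hlam : 0 ≤ lam) :
    ∃ c > 0, ∀ Φ, c * ‖Φ‖ ^ 2 ≤ (lszAction N E Et lam Φ).re := by
  obtain ⟨c, hc, hcE⟩ : ∃ c > 0, ∀ a b, c ≤ E a + Et b := by
    rcases isEmpty_or_nonempty (Fin N) with _ | _
    · exact ⟨1, one_pos, isEmptyElim⟩
    · obtain ⟨p, hp⟩ := Finite.exists_min fun p : Fin N × Fin N => E p.1 + Et p.2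
      exact ⟨_, hE p.1 p.2, fun a b => hp (a, b)⟩
  refine ⟨c, hc, fun Φ => ?_⟩
  calc c * ‖Φ‖ ^ 2 ≤ c * ∑ a, ∑ b, ‖Φ a b‖ ^ 2 := by
        gcongr
        exact (pi_norm_sq_le_sum_norm_sq Φ).trans
          (Finset.sum_le_sum fun a _ => pi_norm_sq_le_sum_norm_sq (Φ a))
    _ = ∑ a, ∑ b, c * ‖Φ a b‖ ^ 2 := by simp only [Finset.mul_sum]
    _ ≤ ∑ a, ∑ b, (E a + Et b) * ‖Φ a b‖ ^ 2 := by
        gcongr with a _ b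
        exact hcE a b
    _ ≤ (lszAction N E Et lam Φ).re := sum_mul_norm_sq_le_re_lszAction hlam Φ

lemma continuous_lszAction : Continuous (lszAction N E Et lam) := by
  unfold lszAction
  fun_prop

lemma integrable_entryMonomial_mul_exp_lszAction {α β : Type*} [Fintype α] [Fintype β]
    (hE : ∀ a b, 0 < E a + Et b) (hlam : 0 ≤ lam) {t : ℝ} (ht : 0 < t)
    (n m : α → Fin N) (n' m' : β → Fin N) :
    Integrable fun Φ : Fin N → Fin N → ℂ =>
      entryMonomial n m n' m' Φ * Complex.exp (-(t : ℂ) * lszAction N E Et lam Φ) := by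
  obtain ⟨c, hc, hcS⟩ := exists_pos_mul_norm_sq_le_re_lszAction hE hlam
  -- Instance search does not see through the nested function space.
  have : (volume : Measure (Fin N → Fin N → ℂ)).IsAddHaarMeasure := Measure.pi.isAddHaarMeasure _
  refine (integrable_norm_pow_mul_exp_neg_mul_norm_sq volume
    (Fintype.card α + Fintype.card β) (mul_pos ht hc)).mono' ?_ (.of_forall fun Φ => ?_)
  · have hcont := continuous_lszAction (E := E) (Et := Et) (lam := lam)
    unfold entryMonomial
    exact (by fun_prop : Continuous _).aestronglyMeasurable
  · rw [norm_mul, Complex.norm_exp]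
    gcongr
    · exact norm_entryMonomial_le n m n' m' Φ
    · rw [← Complex.ofReal_neg, Complex.re_ofReal_mul, neg_mul, neg_mul, neg_le_neg_iff, mul_assoc]
      gcongr
      exact hcS Φ

end Action

/-- If the multiset of row indices (or of column indices) of the
`Φ`-factors differs from that of the `conj Φ`-factors, then the corresponding moment
of the LSZ model vanishes (and the integral converges absolutely). -/
theorem lsz_unbalanced_moments_vanish
    (N r s : ℕ) (hN : 1 ≤ N) (E Et : Fin N → ℝ)
    (hE : ∀ n, 0 < E n) (hEt : ∀ n, 0 < Et n) (lam : ℝ) (hlam : 0 ≤ lam)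
    (n m : Fin r → Fin N) (n' m' : Fin s → Fin N)
    (h : ((List.ofFn n : List (Fin N)) : Multiset (Fin N)) ≠ (List.ofFn n' : List (Fin N))
      ∨ ((List.ofFn m : List (Fin N)) : Multiset (Fin N)) ≠ (List.ofFn m' : List (Fin N))) :
    Integrable (fun Φ : Fin N → Fin N → ℂ =>
      (∏ i, Φ (n i) (m i)) * (∏ j, (starRingEnd ℂ) (Φ (n' j) (m' j))) *
        Complex.exp (-(N : ℂ) * lszAction N E Et lam Φ)) ∧
    (∫ Φ : Fin N → Fin N → ℂ,
      (∏ i, Φ (n i) (m i)) * (∏ j, (starRingEnd ℂ) (Φ (n' j) (m' j))) *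
        Complex.exp (-(N : ℂ) * lszAction N E Et lam Φ)) = 0 := by
  have hpos : ∀ a b, 0 < E a + Et b := fun a b => add_pos (hE a) (hEt b)
  have hN' : (0 : ℝ) < N := Nat.cast_pos.2 hN
  have hint := integrable_entryMonomial_mul_exp_lszAction hpos hlam hN' n m n' m'
  rw [← Fin.univ_val_map, ← Fin.univ_val_map, ← Fin.univ_val_map, ← Fin.univ_val_map] at h
  have hvanish := integral_entryMonomial_mul_eq_zero_of_map_ne h
    (w := fun Φ => Complex.exp (-(N : ℂ) * lszAction N E Et lam Φ))
    fun d e Φ => by rw [lszAction_phaseRotation]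
  exact ⟨by simpa only [entryMonomial, Complex.ofReal_natCast] using hint, hvanish⟩
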